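/- Small-noise expansion of the concrete score ratio. For all x, y ∈ X there exist constants C > 0 and σ₀ ∈ (0,1) such that for all σ ∈ (0,σ₀): |(q_σ(y)/q_σ(x)) · (σ/K)^{d(x,D) − d(y,D)} − p_data(proj_D(y))/p_data(proj_D(x))| ≤ C·σ. Equivalently, q_σ(y)/q_σ(x) = (p_data(proj_D(y))/p_data(proj_D(x))) · (σ/K)^{d(y,D) − d(x,D)} · (1 + O(σ)) as σ → 0⁺. -/

import Mathlib

open scoped Classical

/-- Uniform-corrupted marginal `q_σ(x)`. -/
noncomputable def qUnif (K H : ℕ) (p : (Fin H → Fin K) → ℝ) (σ : ℝ)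
    (x : Fin H → Fin K) : ℝ :=
  ∑ x0 : Fin H → Fin K, p x0 *
    ∏ i : Fin H, ((1 - σ) * (if x i = x0 i then (1 : ℝ) else 0) + σ / K)

/-- Hamming distance from `x` to the support `D = {z : p z ≠ 0}` of `p`. -/
noncomputable def distSupp (K H : ℕ) (p : (Fin H → Fin K) → ℝ)
    (x : Fin H → Fin K) : ℕ :=
  sInf {n : ℕ | ∃ z : Fin H → Fin K, p z ≠ 0 ∧ hammingDist x z = n}

/-- Total `p`-mass of the set `proj_D(x)` of nearest in-support strings to `x`. -/
noncomputable def projMass (K H : ℕ) (p : (Fin H → Fin K) → ℝ)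
    (x : Fin H → Fin K) : ℝ :=
  ∑ z ∈ Finset.univ.filter
      (fun z : Fin H → Fin K => p z ≠ 0 ∧ hammingDist x z = distSupp K H p x), p z

/-! A string `z` of the support at distance `d(x, z)` contributes `p z (σ/K)^{d(x, z)}` to `q_σ(x)`,
up to a factor tending to `1`. Dividing by `(σ/K)^{d(x, D)}` therefore leaves a polynomial in `σ`
whose value at `0` only sees the nearest strings and equals `p(proj_D(x))`. The rescaled score is
the quotient of two such polynomials, hence differentiable at `0` as soon as `p(proj_D(x)) ≠ 0`, and
differentiability gives the `O(σ)` error. -/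

lemma prod_ite_eq_pow_mul_pow_hammingDist {ι M : Type*} {α : ι → Type*} [Fintype ι]
    [∀ i, DecidableEq (α i)] [CommMonoid M] (x z : ∀ i, α i) (a b : M) :
    ∏ i, (if x i = z i then a else b) =
      a ^ (Fintype.card ι - hammingDist x z) * b ^ hammingDist x z := by
  have card_agree : (Finset.univ.filter fun i => x i = z i).card =
      Fintype.card ι - hammingDist x z := by
    have card_add := Finset.card_filter_add_card_filter_not (s := (Finset.univ : Finset ι))
      fun i => x i = z i
    rw [Finset.card_univ] at card_add
    exact Nat.eq_sub_of_add_eq card_add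
  rw [Finset.prod_ite, Finset.prod_const, Finset.prod_const, card_agree, hammingDist]

lemma pow_mul_div_pow_mul_mul_zpow_sub {F : Type*} [Field F] {b : F} (hb : b ≠ 0) (m n : ℕ)
    (u v : F) : b ^ m * u / (b ^ n * v) * b ^ ((n : ℤ) - (m : ℤ)) = u / v := by
  rw [zpow_sub₀ hb, zpow_natCast, zpow_natCast]
  field_simp

lemma exists_norm_sub_le_mul_of_differentiableAt {E : Type*} [NormedAddCommGroup E]
    [NormedSpace ℝ E] {f : ℝ → E} {a : ℝ} (hf : DifferentiableAt ℝ f a) :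
    ∃ C > (0 : ℝ), ∃ δ ∈ Set.Ioo (0 : ℝ) 1, ∀ t ∈ Set.Ioo (0 : ℝ) δ,
      ‖f (a + t) - f a‖ ≤ C * t := by
  obtain ⟨C, hC, hbound⟩ := hf.isBigO_sub.exists_pos
  obtain ⟨ε, hε, hball⟩ := Metric.eventually_nhds_iff.1 hbound.bound
  refine ⟨C, hC, min ε (1 / 2), ⟨by positivity, by norm_num⟩, fun t ht => ?_⟩
  have near : dist (a + t) a < ε := by
    simpa [abs_of_pos ht.1] using ht.2.trans_le (min_le_left _ _)
  simpa [abs_of_pos ht.1] using hball near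

section

variable {K H : ℕ} {p : (Fin H → Fin K) → ℝ}

lemma distSupp_le_hammingDist (x : Fin H → Fin K) {z : Fin H → Fin K} (hz : p z ≠ 0) :
    distSupp K H p x ≤ hammingDist x z :=
  Nat.sInf_le ⟨z, hz, rfl⟩

lemma exists_hammingDist_eq_distSupp (hp : p ≠ 0) (x : Fin H → Fin K) :
    ∃ z, p z ≠ 0 ∧ hammingDist x z = distSupp K H p x := by
  obtain ⟨z, hz⟩ := Function.ne_iff.1 hp
  exact Nat.sInf_mem (s := {n | ∃ z, p z ≠ 0 ∧ hammingDist x z = n}) ⟨_, z, hz, rfl⟩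

lemma projMass_pos (hp0 : ∀ v, 0 ≤ p v) (hp : p ≠ 0) (x : Fin H → Fin K) :
    0 < projMass K H p x := by
  obtain ⟨z, hz, hdist⟩ := exists_hammingDist_eq_distSupp hp x
  refine Finset.sum_pos (fun v hv => ?_) ⟨z, by simp [hz, hdist]⟩
  exact (hp0 v).lt_of_ne' (Finset.mem_filter.1 hv).2.1

lemma prod_uniformNoise_eq (σ : ℝ) (x z : Fin H → Fin K) :
    ∏ i, ((1 - σ) * (if x i = z i then (1 : ℝ) else 0) + σ / K) =
      (1 - σ + σ / K) ^ (H - hammingDist x z) * (σ / K) ^ hammingDist x z := by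
  simpa [ite_add] using
    prod_ite_eq_pow_mul_pow_hammingDist x z (1 - σ + σ / K) (σ / K)

/-- The marginal `q_σ(x)` divided by its leading order `(σ/K)^{d(x, D)}`, written as a polynomial in
`σ` so that it also makes sense at `σ = 0`. The subtraction in the exponent of `σ / K` truncates
only for `z` outside the support, where `p z = 0`. -/
noncomputable def rescaledMarginal (K H : ℕ) (p : (Fin H → Fin K) → ℝ) (σ : ℝ)
    (x : Fin H → Fin K) : ℝ :=
  ∑ z, p z * ((1 - σ + σ / K) ^ (H - hammingDist x z) *
    (σ / K) ^ (hammingDist x z - distSupp K H p x))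

lemma qUnif_eq_pow_mul_rescaledMarginal (σ : ℝ) (x : Fin H → Fin K) :
    qUnif K H p σ x = (σ / K) ^ distSupp K H p x * rescaledMarginal K H p σ x := by
  rw [qUnif, rescaledMarginal, Finset.mul_sum]
  refine Finset.sum_congr rfl fun z _ => ?_
  by_cases hz : p z = 0
  · simp [hz]
  · rw [prod_uniformNoise_eq, ← pow_sub_mul_pow (σ / K) (distSupp_le_hammingDist x hz)]
    ring

lemma rescaledMarginal_zero (x : Fin H → Fin K) :
    rescaledMarginal K H p 0 x = projMass K H p x := by
  rw [rescaledMarginal, projMass, Finset.sum_filter]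
  refine Finset.sum_congr rfl fun z _ => ?_
  by_cases hz : p z = 0
  · simp [hz]
  · have nearest_iff : hammingDist x z - distSupp K H p x = 0 ↔
        hammingDist x z = distSupp K H p x := by
      have := distSupp_le_hammingDist x hz
      omega
    simp [hz, zero_pow_eq, nearest_iff]

lemma differentiable_rescaledMarginal (x : Fin H → Fin K) :
    Differentiable ℝ fun σ => rescaledMarginal K H p σ x := by
  unfold rescaledMarginal
  fun_prop

lemma qUnif_div_qUnif_mul_zpow (hK : K ≠ 0) {σ : ℝ} (hσ : σ ≠ 0) (x y : Fin H → Fin K) :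
    qUnif K H p σ y / qUnif K H p σ x *
        (σ / K) ^ ((distSupp K H p x : ℤ) - (distSupp K H p y : ℤ)) =
      rescaledMarginal K H p σ y / rescaledMarginal K H p σ x := by
  rw [qUnif_eq_pow_mul_rescaledMarginal, qUnif_eq_pow_mul_rescaledMarginal]
  exact pow_mul_div_pow_mul_mul_zpow_sub (div_ne_zero hσ (Nat.cast_ne_zero.2 hK)) _ _ _ _

theorem concrete_score_small_noise_expansion_general (hK : K ≠ 0) {x : Fin H → Fin K}
    (hx : projMass K H p x ≠ 0) (y : Fin H → Fin K) :
    ∃ C > (0 : ℝ), ∃ σ₀ ∈ Set.Ioo (0 : ℝ) 1, ∀ σ ∈ Set.Ioo (0 : ℝ) σ₀,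
      |(qUnif K H p σ y / qUnif K H p σ x)
          * (σ / K) ^ ((distSupp K H p x : ℤ) - (distSupp K H p y : ℤ))
        - projMass K H p y / projMass K H p x| ≤ C * σ := by
  have ratio_differentiableAt : DifferentiableAt ℝ
      (fun σ => rescaledMarginal K H p σ y / rescaledMarginal K H p σ x) 0 :=
    (differentiable_rescaledMarginal y 0).fun_div (differentiable_rescaledMarginal x 0)
      (by rwa [rescaledMarginal_zero])
  obtain ⟨C, hC, σ₀, hσ₀, hbound⟩ :=
    exists_norm_sub_le_mul_of_differentiableAt ratio_differentiableAt
  refine ⟨C, hC, σ₀, hσ₀, fun σ hσ => ?_⟩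
  rw [qUnif_div_qUnif_mul_zpow hK hσ.1.ne']
  simpa only [zero_add, rescaledMarginal_zero, Real.norm_eq_abs] using hbound σ hσ

end

/-- Small-noise expansion of the concrete score ratio:
`|(q_σ(y)/q_σ(x)) (σ/K)^{d(x,D)−d(y,D)} − p(proj_D(y))/p(proj_D(x))| ≤ Cσ`
for all small `σ`, i.e. `q_σ(y)/q_σ(x) = (p(proj_D(y))/p(proj_D(x))) (σ/K)^{d(y,D)−d(x,D)} (1+O(σ))`. -/
theorem concrete_score_small_noise_expansion
    (K H : ℕ) (hK : 2 ≤ K) (hH : 1 ≤ H)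
    (p : (Fin H → Fin K) → ℝ) (hp0 : ∀ v, 0 ≤ p v) (hp1 : ∑ v, p v = 1)
    (x y : Fin H → Fin K) :
    ∃ C > (0 : ℝ), ∃ σ₀ ∈ Set.Ioo (0 : ℝ) 1, ∀ σ ∈ Set.Ioo (0 : ℝ) σ₀,
      |(qUnif K H p σ y / qUnif K H p σ x)
          * (σ / K) ^ ((distSupp K H p x : ℤ) - (distSupp K H p y : ℤ))
        - projMass K H p y / projMass K H p x| ≤ C * σ :=
  concrete_score_small_noise_expansion_general (by omega)
    (projMass_pos hp0 (by rintro rfl; simp at hp1) x).ne' y
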